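/- Let X = !![0,1;1,0], Y = !![0,-i;i,0], Z = !![1,0;0,-1], and I the 2×2 identity over ℂ. Let the four generators of the five-qubit code's stabilizer be the Kronecker products G₁ = X⊗Z⊗Z⊗X⊗I, G₂ = I⊗X⊗Z⊗Z⊗X, G₃ = X⊗I⊗X⊗Z⊗Z, G₄ = Z⊗X⊗I⊗X⊗Z. Then for every function f : Fin 5 → Fin 4 (with 0 ↦ I, 1 ↦ X, 2 ↦ Y, 3 ↦ Z) whose support (the set of positions with f ≠ 0) is nonempty and has at most 2 elements, the Kronecker product E determined by f anticommutes with at least one generator: there exists k ∈ Fin 4 with E * Gₖ = -(Gₖ * E). -/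

import Mathlib

open Matrix

noncomputable def X : Matrix (Fin 2) (Fin 2) ℂ := !![0, 1; 1, 0]
noncomputable def Y : Matrix (Fin 2) (Fin 2) ℂ := !![0, -Complex.I; Complex.I, 0]
noncomputable def Z : Matrix (Fin 2) (Fin 2) ℂ := !![1, 0; 0, -1]
noncomputable def I2 : Matrix (Fin 2) (Fin 2) ℂ := 1

/-- The four single-qubit Pauli matrices: `0 ↦ I`, `1 ↦ X`, `2 ↦ Y`, `3 ↦ Z`. -/
noncomputable def pauli : Fin 4 → Matrix (Fin 2) (Fin 2) ℂ := ![I2, X, Y, Z]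

/-- Kronecker product of square matrices, reindexed to `Fin (m * n)`
with lexicographic (big-endian) ordering of the basis. -/
noncomputable def mkron {m n : ℕ} (A : Matrix (Fin m) (Fin m) ℂ)
    (B : Matrix (Fin n) (Fin n) ℂ) : Matrix (Fin (m * n)) (Fin (m * n)) ℂ :=
  Matrix.reindex finProdFinEquiv finProdFinEquiv (Matrix.kroneckerMap (· * ·) A B)

infixl:100 " ⊗ₖ " => mkron

/-- The four generators of the stabilizer of the five-qubit `[5,1,3]` code. -/
noncomputable def fiveQubitGen : Fin 4 → Matrix (Fin 32) (Fin 32) ℂ :=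
  ![X ⊗ₖ Z ⊗ₖ Z ⊗ₖ X ⊗ₖ I2,
    I2 ⊗ₖ X ⊗ₖ Z ⊗ₖ Z ⊗ₖ X,
    X ⊗ₖ I2 ⊗ₖ X ⊗ₖ Z ⊗ₖ Z,
    Z ⊗ₖ X ⊗ₖ I2 ⊗ₖ X ⊗ₖ Z]

/-!
Two Pauli strings commute up to the product, over the qubits, of the signs by which their letters
commute. The signs of an error against all generators form its syndrome, and syndromes multiply
over qubits. The fifteen nontrivial single-qubit errors of the five-qubit code have distinct
nontrivial syndromes (as many as there are nontrivial elements of `{±1}⁴`), so the syndrome of an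
error supported on two qubits is trivial only if the error is.
-/

section Kronecker

variable {m n : ℕ}

theorem mkron_mul_mkron (A A' : Matrix (Fin m) (Fin m) ℂ) (B B' : Matrix (Fin n) (Fin n) ℂ) :
    mkron A B * mkron A' B' = mkron (A * A') (B * B') := by
  simp only [mkron, reindex_apply, submatrix_mul_equiv, mul_kronecker_mul]

variable {R : Type*} [Mul R] [SMul R ℂ] [IsScalarTower R ℂ ℂ] [IsScalarTower R R ℂ]
  [SMulCommClass R ℂ ℂ]

theorem mkron_smul_smul (r s : R) (A : Matrix (Fin m) (Fin m) ℂ) (B : Matrix (Fin n) (Fin n) ℂ) :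
    mkron (r • A) (s • B) = (r * s) • mkron A B := by
  ext i j
  exact smul_mul_smul_comm _ _ _ _

theorem mkron_mul_mkron_eq_smul {r s : R} {A A' : Matrix (Fin m) (Fin m) ℂ}
    {B B' : Matrix (Fin n) (Fin n) ℂ} (hA : A * A' = r • (A' * A)) (hB : B * B' = s • (B' * B)) :
    mkron A B * mkron A' B' = (r * s) • (mkron A' B' * mkron A B) := by
  rw [mkron_mul_mkron, mkron_mul_mkron, hA, hB, mkron_smul_smul]

end Kronecker

theorem X_mul_Y_eq_neg : X * Y = -(Y * X) := by
  simp [X, Y]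

theorem X_mul_Z_eq_neg : X * Z = -(Z * X) := by
  simp [X, Z]

theorem Y_mul_Z_eq_neg : Y * Z = -(Z * Y) := by
  simp [Y, Z]

/-- The sign by which the single-qubit Pauli matrices labelled `a` and `b` commute, as a unit of
`ℤ` so that it is its own inverse. -/
def pauliSign (a b : Fin 4) : ℤˣ := if a = 0 ∨ b = 0 ∨ a = b then 1 else -1

theorem pauliSign_zero_left (b : Fin 4) : pauliSign 0 b = 1 := if_pos (Or.inl rfl)

theorem pauli_mul_pauli_eq_smul (a b : Fin 4) :
    pauli a * pauli b = pauliSign a b • (pauli b * pauli a) := by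
  fin_cases a <;> fin_cases b <;>
    simp [pauli, pauliSign, I2, X_mul_Y_eq_neg, X_mul_Z_eq_neg, Y_mul_Z_eq_neg]

/-- The five-qubit Pauli operator whose tensor factors are labelled by `f`. -/
noncomputable def pauliString (f : Fin 5 → Fin 4) : Matrix (Fin 32) (Fin 32) ℂ :=
  pauli (f 0) ⊗ₖ pauli (f 1) ⊗ₖ pauli (f 2) ⊗ₖ pauli (f 3) ⊗ₖ pauli (f 4)

theorem pauliString_mul_pauliString_eq_smul (f g : Fin 5 → Fin 4) :
    pauliString f * pauliString g =
      (∏ j, pauliSign (f j) (g j)) • (pauliString g * pauliString f) := by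
  have hsign (j : Fin 5) := pauli_mul_pauli_eq_smul (f j) (g j)
  rw [Fin.prod_univ_five]
  exact mkron_mul_mkron_eq_smul (mkron_mul_mkron_eq_smul (mkron_mul_mkron_eq_smul
    (mkron_mul_mkron_eq_smul (hsign 0) (hsign 1)) (hsign 2)) (hsign 3)) (hsign 4)

section Syndrome

variable {ι κ : Type*}

/-- The syndrome of the Pauli error `a` on the single qubit `j`: the signs by which it commutes
with the generators, of which `g k j` labels the tensor factor of the `k`-th at qubit `j`. -/
def siteSyndrome (g : κ → ι → Fin 4) (j : ι) (a : Fin 4) : κ → ℤˣ :=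
  fun k => pauliSign a (g k j)

theorem siteSyndrome_zero (g : κ → ι → Fin 4) (j : ι) : siteSyndrome g j 0 = 1 :=
  funext fun k => pauliSign_zero_left (g k j)

variable [Fintype ι]

/-- The syndrome of the Pauli error labelled by `f` with respect to the generators labelled by the
rows of `g`; its `k`-th entry is `-1` when the error is detected by the `k`-th generator. -/
def syndrome (g : κ → ι → Fin 4) (f : ι → Fin 4) : κ → ℤˣ :=
  ∏ j, siteSyndrome g j (f j)

theorem syndrome_apply (g : κ → ι → Fin 4) (f : ι → Fin 4) (k : κ) :
    syndrome g f k = ∏ j, pauliSign (f j) (g k j) :=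
  Finset.prod_apply k _ _

theorem syndrome_eq_mul_of_support_subset_pair (g : κ → ι → Fin 4) {f : ι → Fin 4} {i j : ι}
    (hij : i ≠ j) (hf : ∀ l, f l ≠ 0 → l = i ∨ l = j) :
    syndrome g f = siteSyndrome g i (f i) * siteSyndrome g j (f j) := by
  refine Fintype.prod_eq_mul i j hij fun l hl => ?_
  have hfl : f l = 0 := by
    by_contra hne
    exact (hf l hne).elim hl.1 hl.2
  rw [hfl, siteSyndrome_zero]

theorem syndrome_ne_one_of_card_support_le_two [Nontrivial ι] {g : κ → ι → Fin 4}
    (hg : ∀ i j, i ≠ j → ∀ a b, siteSyndrome g i a = siteSyndrome g j b → a = 0 ∧ b = 0)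
    {f : ι → Fin 4} (hne : ∃ j, f j ≠ 0)
    (hwt : (Finset.univ.filter fun j => f j ≠ 0).card ≤ 2) :
    syndrome g f ≠ 1 := by
  classical
  obtain ⟨t, hft, -, ht⟩ := Finset.exists_subsuperset_card_eq
    (Finset.subset_univ _) hwt (Finset.one_lt_card_iff_nontrivial.mpr Finset.univ_nontrivial)
  obtain ⟨i, j, hij, rfl⟩ := Finset.card_eq_two.mp ht
  have hsupp (l : ι) (hl : f l ≠ 0) : l = i ∨ l = j := by
    simpa using hft (Finset.mem_filter.mpr ⟨Finset.mem_univ l, hl⟩)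
  intro hone
  rw [syndrome_eq_mul_of_support_subset_pair g hij hsupp] at hone
  have hsite : siteSyndrome g i (f i) = siteSyndrome g j (f j) := by
    funext k
    rw [← Int.units_inv_eq_self (siteSyndrome g j (f j) k)]
    exact eq_inv_of_mul_eq_one_left (congrFun hone k)
  obtain ⟨hi, hj⟩ := hg i j hij _ _ hsite
  obtain ⟨l, hl⟩ := hne
  rcases hsupp l hl with rfl | rfl
  · exact hl hi
  · exact hl hj

end Syndrome

/-- The Pauli labels of the tensor factors of the generators of the five-qubit code. -/
def fiveQubitLabel : Fin 4 → Fin 5 → Fin 4 :=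
  ![![1, 3, 3, 1, 0], ![0, 1, 3, 3, 1], ![1, 0, 1, 3, 3], ![3, 1, 0, 1, 3]]

theorem fiveQubitGen_eq_pauliString (k : Fin 4) :
    fiveQubitGen k = pauliString (fiveQubitLabel k) := by
  fin_cases k <;> rfl

theorem eq_zero_of_siteSyndrome_fiveQubitLabel_eq : ∀ i j : Fin 5, i ≠ j → ∀ a b : Fin 4,
    siteSyndrome fiveQubitLabel i a = siteSyndrome fiveQubitLabel j b → a = 0 ∧ b = 0 := by
  decide

theorem exists_syndrome_fiveQubitLabel_eq_neg_one {f : Fin 5 → Fin 4} (hne : ∃ j, f j ≠ 0)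
    (hwt : (Finset.univ.filter fun j => f j ≠ 0).card ≤ 2) :
    ∃ k, syndrome fiveQubitLabel f k = -1 := by
  obtain ⟨k, hk⟩ := Function.ne_iff.mp
    (syndrome_ne_one_of_card_support_le_two eq_zero_of_siteSyndrome_fiveQubitLabel_eq hne hwt)
  exact ⟨k, (Int.units_eq_one_or _).resolve_left hk⟩

/-- Every nontrivial Pauli operator of weight at most 2 anticommutes with at least one
generator of the five-qubit code's stabilizer. -/
theorem five_qubit_code_weight_two_errors_anticommute (f : Fin 5 → Fin 4)
    (hne : ∃ j, f j ≠ 0)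
    (hwt : (Finset.univ.filter fun j => f j ≠ 0).card ≤ 2) :
    ∃ k : Fin 4,
      (pauli (f 0) ⊗ₖ pauli (f 1) ⊗ₖ pauli (f 2) ⊗ₖ pauli (f 3) ⊗ₖ pauli (f 4)) *
          fiveQubitGen k =
        -(fiveQubitGen k *
          (pauli (f 0) ⊗ₖ pauli (f 1) ⊗ₖ pauli (f 2) ⊗ₖ pauli (f 3) ⊗ₖ pauli (f 4))) := by
  obtain ⟨k, hk⟩ := exists_syndrome_fiveQubitLabel_eq_neg_one hne hwt
  refine ⟨k, ?_⟩
  change pauliString f * fiveQubitGen k = -(fiveQubitGen k * pauliString f)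
  rw [fiveQubitGen_eq_pauliString, pauliString_mul_pauliString_eq_smul, ← syndrome_apply, hk,
    Units.neg_smul, one_smul]
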